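/- Let n ≥ 3 and let t : {1,…,2n} → {A,B} be a type assignment with t(1)=A, t(2)=B, t(3)=B, t(2n−2)=A, t(2n−1)=A, and t(2n)=B. Then every stable matching of the instance contains the pair {2,2n−1}, and the stable matchings of the instance are exactly the sets M' ∪ {{2,2n−1}} where M' ranges over the stable matchings of the restricted 1-attribute instance on {1} ∪ {3,…,2n−2} ∪ {2n}. -/

import Mathlib

/-!
Write `N = 2n`. Suppose a stable matching does not contain `{2, N-1}`. Person 2 (type B) ranks only
`N` above `N-1`, and `N-1` (type A) ranks only `1` above `2`, so `{2, N-1}` fails to block only if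
`{2, N}` or `{1, N-1}` is matched. In the first case `{3, N}` blocks: `N` is the favourite of `3`,
and `N` prefers `3` to `2`. In the second case `{1, N-2}` blocks symmetrically. Hence `{2, N-1}` is
in every stable matching, and removing this pair cannot create blocking pairs.

Conversely, if `{2, N-1}` is added to a stable matching of the restricted instance, a new blocking
pair can only be `{2, N}` or `{1, N-1}`, and each of them forces `1` and `N` to be partners. Then
`{3, N}` would already block the restricted matching.

The facts on matchings are `IsMatching.insert_pair` and `IsMatching.erase_pair` (adding and removing
a pair) and `IsStable.not_both_prefer` (stability in terms of given partners).
-/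

/-- The two preference types in the 1-attribute stable roommate model. -/
inductive AttrType : Type
  | A : AttrType
  | B : AttrType
  deriving DecidableEq

/-- In the 1-attribute instance with type assignment `t`, person `i`
prefers person `j` to person `k`: type `A` people prefer smaller indices,
type `B` people prefer larger indices. -/
def Prefers (t : ℕ → AttrType) (i j k : ℕ) : Prop :=
  match t i with
  | AttrType.A => j < k
  | AttrType.B => k < j

/-- `M` is a matching of the people in `S`: a partition of `S` into
unordered pairs. -/
def IsMatching (S : Finset ℕ) (M : Finset (Finset ℕ)) : Prop :=
  (∀ p ∈ M, ∃ i j, i ≠ j ∧ i ∈ S ∧ j ∈ S ∧ p = {i, j}) ∧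
  (∀ i ∈ S, ∃! p, p ∈ M ∧ i ∈ p)

/-- The pair `{i, j}` is a blocking pair for the matching `M`:
it is not in `M`, and each of `i`, `j` prefers the other to their
partner in `M`. -/
def IsBlocking (t : ℕ → AttrType) (M : Finset (Finset ℕ)) (i j : ℕ) : Prop :=
  i ≠ j ∧ ({i, j} : Finset ℕ) ∉ M ∧
  (∀ k, ({i, k} : Finset ℕ) ∈ M → k ≠ i → Prefers t i j k) ∧
  (∀ k, ({j, k} : Finset ℕ) ∈ M → k ≠ j → Prefers t j i k)

/-- `M` is a stable matching of the 1-attribute instance on the set of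
people `S` with type assignment `t`. -/
def IsStable (t : ℕ → AttrType) (S : Finset ℕ) (M : Finset (Finset ℕ)) : Prop :=
  IsMatching S M ∧ ∀ i ∈ S, ∀ j ∈ S, ¬ IsBlocking t M i j

lemma prefers_A {t : ℕ → AttrType} {i j k : ℕ} (h : t i = AttrType.A) :
    Prefers t i j k ↔ j < k := by
  simp [Prefers, h]

lemma prefers_B {t : ℕ → AttrType} {i j k : ℕ} (h : t i = AttrType.B) :
    Prefers t i j k ↔ k < j := by
  simp [Prefers, h]

lemma pair_right_inj {i k l : ℕ} (h : ({i, k} : Finset ℕ) = {i, l}) : k = l := by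
  have hk : k ∈ ({i, l} : Finset ℕ) := h ▸ by simp
  have hl : l ∈ ({i, k} : Finset ℕ) := h ▸ by simp
  simp only [Finset.mem_insert, Finset.mem_singleton] at hk hl
  omega

lemma IsMatching.partner_unique {S : Finset ℕ} {M : Finset (Finset ℕ)} (h : IsMatching S M)
    {i k l : ℕ} (hi : i ∈ S) (hk : ({i, k} : Finset ℕ) ∈ M) (hl : ({i, l} : Finset ℕ) ∈ M) :
    k = l :=
  pair_right_inj ((h.2 i hi).unique ⟨hk, by simp⟩ ⟨hl, by simp⟩)

lemma IsMatching.exists_partner {S : Finset ℕ} {M : Finset (Finset ℕ)} (h : IsMatching S M)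
    {i : ℕ} (hi : i ∈ S) : ∃ k ∈ S, k ≠ i ∧ ({i, k} : Finset ℕ) ∈ M := by
  obtain ⟨p, ⟨hp, hip⟩, -⟩ := h.2 i hi
  obtain ⟨a, b, hab, ha, hb, rfl⟩ := h.1 p hp
  simp only [Finset.mem_insert, Finset.mem_singleton] at hip
  rcases hip with rfl | rfl
  · exact ⟨b, hb, hab.symm, hp⟩
  · exact ⟨a, ha, hab, by rwa [Finset.pair_comm]⟩

lemma IsMatching.subset {S : Finset ℕ} {M : Finset (Finset ℕ)} (h : IsMatching S M)
    {p : Finset ℕ} (hp : p ∈ M) : p ⊆ S := by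
  obtain ⟨a, b, -, ha, hb, rfl⟩ := h.1 p hp
  intro x hx
  simp only [Finset.mem_insert, Finset.mem_singleton] at hx
  rcases hx with rfl | rfl <;> assumption

lemma IsStable.not_both_prefer {t : ℕ → AttrType} {S : Finset ℕ} {M : Finset (Finset ℕ)}
    (h : IsStable t S M) {i j k l : ℕ} (hi : i ∈ S) (hj : j ∈ S) (hij : i ≠ j)
    (hik : ({i, k} : Finset ℕ) ∈ M) (hjl : ({j, l} : Finset ℕ) ∈ M) (hkj : k ≠ j)
    (hpi : Prefers t i j k) (hpj : Prefers t j i l) : False := by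
  refine h.2 i hi j hj ⟨hij, fun hm => hkj (h.1.partner_unique hi hik hm), ?_, ?_⟩
  · intro k' hk' _
    rwa [h.1.partner_unique hi hk' hik]
  · intro l' hl' _
    rwa [h.1.partner_unique hj hl' hjl]

lemma IsMatching.insert_pair {S : Finset ℕ} {M : Finset (Finset ℕ)} (h : IsMatching S M)
    {a b : ℕ} (hab : a ≠ b) (ha : a ∉ S) (hb : b ∉ S) :
    IsMatching (insert a (insert b S)) (M ∪ {({a, b} : Finset ℕ)}) := by
  refine ⟨fun p hp => ?_, fun i hi => ?_⟩
  · rcases Finset.mem_union.1 hp with hp | hp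
    · obtain ⟨i, j, hij, hi, hj, rfl⟩ := h.1 p hp
      exact ⟨i, j, hij, by simp [hi], by simp [hj], rfl⟩
    · exact ⟨a, b, hab, by simp, by simp, Finset.mem_singleton.1 hp⟩
  · by_cases hiS : i ∈ S
    · obtain ⟨p, ⟨hp, hip⟩, hu⟩ := h.2 i hiS
      refine ⟨p, ⟨by simp [hp], hip⟩, ?_⟩
      rintro q ⟨hq, hiq⟩
      rcases Finset.mem_union.1 hq with hq | hq
      · exact hu q ⟨hq, hiq⟩
      · rw [Finset.mem_singleton.1 hq] at hiq
        simp only [Finset.mem_insert, Finset.mem_singleton] at hiq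
        rcases hiq with rfl | rfl <;> contradiction
    · have hiab : i ∈ ({a, b} : Finset ℕ) := by
        simp only [Finset.mem_insert, Finset.mem_singleton] at hi ⊢
        tauto
      refine ⟨{a, b}, ⟨by simp, hiab⟩, ?_⟩
      rintro q ⟨hq, hiq⟩
      rcases Finset.mem_union.1 hq with hq | hq
      · exact absurd (h.subset hq hiq) hiS
      · exact Finset.mem_singleton.1 hq

lemma IsMatching.erase_pair {S : Finset ℕ} {M : Finset (Finset ℕ)} {a b : ℕ} (ha : a ∉ S)
    (hb : b ∉ S) (h : IsMatching (insert a (insert b S)) M) (hM : ({a, b} : Finset ℕ) ∈ M) :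
    IsMatching S (M.erase {a, b}) := by
  -- A pair meeting `{a, b}` equals it, by uniqueness of the pair covering a person.
  have key : ∀ p ∈ M, p ≠ {a, b} → a ∉ p ∧ b ∉ p := by
    refine fun p hp hne => ⟨fun hap => hne ?_, fun hbp => hne ?_⟩
    · exact (h.2 a (by simp)).unique ⟨hp, hap⟩ ⟨hM, by simp⟩
    · exact (h.2 b (by simp)).unique ⟨hp, hbp⟩ ⟨hM, by simp⟩
  refine ⟨fun p hp => ?_, fun i hi => ?_⟩
  · obtain ⟨hne, hp⟩ := Finset.mem_erase.1 hp
    obtain ⟨hap, hbp⟩ := key p hp hne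
    obtain ⟨i, j, hij, hi, hj, rfl⟩ := h.1 p hp
    simp only [Finset.mem_insert, Finset.mem_singleton, not_or] at hi hj hap hbp
    exact ⟨i, j, hij, by grind, by grind, rfl⟩
  · obtain ⟨p, ⟨hp, hip⟩, hu⟩ := h.2 i (by simp [hi])
    refine ⟨p, ⟨Finset.mem_erase.2 ⟨?_, hp⟩, hip⟩,
      fun q hq => hu q ⟨Finset.mem_of_mem_erase hq.1, hq.2⟩⟩
    rintro rfl
    simp only [Finset.mem_insert, Finset.mem_singleton] at hip
    rcases hip with rfl | rfl <;> contradiction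

/-- Case (M3): types 1A, 2B, 3B, (2n-2)A, (2n-1)A, (2n)B.  Every stable
matching contains the pair {2,2n-1}, and the stable matchings are exactly
the stable matchings of the restricted instance on
{1} ∪ {3,…,2n-2} ∪ {2n} together with {2,2n-1}. -/
theorem one_attribute_case_M3 (n : ℕ) (hn : 3 ≤ n) (t : ℕ → AttrType)
    (h1 : t 1 = AttrType.A) (h2 : t 2 = AttrType.B) (h3 : t 3 = AttrType.B)
    (h4 : t (2 * n - 2) = AttrType.A) (h5 : t (2 * n - 1) = AttrType.A)
    (h6 : t (2 * n) = AttrType.B) :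
    (∀ M : Finset (Finset ℕ), IsStable t (Finset.Icc 1 (2 * n)) M →
      ({2, 2 * n - 1} : Finset ℕ) ∈ M) ∧
    (∀ M : Finset (Finset ℕ), IsStable t (Finset.Icc 1 (2 * n)) M ↔
      ∃ M' : Finset (Finset ℕ),
        IsStable t (insert 1 (insert (2 * n) (Finset.Icc 3 (2 * n - 2)))) M' ∧
        M = M' ∪ {({2, 2 * n - 1} : Finset ℕ)}) := by
  have hIcc : Finset.Icc 1 (2 * n) =
      insert 2 (insert (2 * n - 1) (insert 1 (insert (2 * n) (Finset.Icc 3 (2 * n - 2))))) := by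
    ext x
    simp only [Finset.mem_insert, Finset.mem_Icc]
    omega
  have h2S : 2 ∉ insert 1 (insert (2 * n) (Finset.Icc 3 (2 * n - 2))) := by
    simp only [Finset.mem_insert, Finset.mem_Icc]
    omega
  have hNS : 2 * n - 1 ∉ insert 1 (insert (2 * n) (Finset.Icc 3 (2 * n - 2))) := by
    simp only [Finset.mem_insert, Finset.mem_Icc]
    omega
  have first : ∀ M : Finset (Finset ℕ), IsStable t (Finset.Icc 1 (2 * n)) M →
      ({2, 2 * n - 1} : Finset ℕ) ∈ M := by
    intro M hM
    by_contra hnot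
    have mem : ∀ i, 1 ≤ i → i ≤ 2 * n → i ∈ Finset.Icc 1 (2 * n) :=
      fun i h h' => Finset.mem_Icc.2 ⟨h, h'⟩
    have m1 := mem 1 (by omega) (by omega)
    have m2 := mem 2 (by omega) (by omega)
    have m3 := mem 3 (by omega) (by omega)
    have m4 := mem (2 * n - 2) (by omega) (by omega)
    have m5 := mem (2 * n - 1) (by omega) (by omega)
    have m6 := mem (2 * n) (by omega) (by omega)
    obtain ⟨p, hpS, hp2, hp⟩ := hM.1.exists_partner m2
    obtain ⟨q, hqS, hq5, hq⟩ := hM.1.exists_partner m5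
    rw [Finset.mem_Icc] at hpS hqS
    have hp5 : p ≠ 2 * n - 1 := by
      rintro rfl
      exact hnot hp
    have hq2 : q ≠ 2 := by
      rintro rfl
      exact hnot (by rwa [Finset.pair_comm])
    have hcase : p = 2 * n ∨ q = 1 := by
      by_contra hc
      exact hM.not_both_prefer m2 m5 (by omega) hp hq hp5
        ((prefers_B h2).2 (by omega)) ((prefers_A h5).2 (by omega))
    rcases hcase with rfl | rfl
    · obtain ⟨r, hrS, hr3, hr⟩ := hM.1.exists_partner m3
      rw [Finset.mem_Icc] at hrS
      rw [Finset.pair_comm] at hp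
      have hrN : r ≠ 2 * n := by
        rintro rfl
        rw [Finset.pair_comm] at hr
        exact absurd (hM.1.partner_unique m6 hp hr) (by omega)
      exact hM.not_both_prefer m3 m6 (by omega) hr hp hrN
        ((prefers_B h3).2 (by omega)) ((prefers_B h6).2 (by omega))
    · obtain ⟨r, hrS, hr4, hr⟩ := hM.1.exists_partner m4
      rw [Finset.mem_Icc] at hrS
      rw [Finset.pair_comm] at hq
      have hr1 : r ≠ 1 := by
        rintro rfl
        rw [Finset.pair_comm] at hr
        exact absurd (hM.1.partner_unique m1 hq hr) (by omega)
      exact hM.not_both_prefer m4 m1 (by omega) hr hq hr1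
        ((prefers_A h4).2 (by omega)) ((prefers_A h1).2 (by omega))
  refine ⟨first, fun M => ⟨fun hM => ?_, ?_⟩⟩
  · have hin := first M hM
    refine ⟨M.erase {2, 2 * n - 1}, ⟨?_, ?_⟩, ?_⟩
    · exact IsMatching.erase_pair h2S hNS (hIcc ▸ hM.1) hin
    · rintro i hi j hj ⟨hij, hnot, hbi, hbj⟩
      -- A pair containing a person of the restricted instance differs from `{2, 2n-1}`.
      have hne : ∀ x ∈ insert 1 (insert (2 * n) (Finset.Icc 3 (2 * n - 2))), ∀ k,
          ({x, k} : Finset ℕ) ≠ {2, 2 * n - 1} := by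
        intro x hx k he
        have hx' : x ∈ ({2, 2 * n - 1} : Finset ℕ) := he ▸ by simp
        simp only [Finset.mem_insert, Finset.mem_singleton] at hx'
        rcases hx' with rfl | rfl
        · exact h2S hx
        · exact hNS hx
      refine hM.2 i (by rw [hIcc]; simp only [Finset.mem_insert] at hi ⊢; tauto)
        j (by rw [hIcc]; simp only [Finset.mem_insert] at hj ⊢; tauto) ⟨hij, fun hm => ?_, ?_, ?_⟩
      · exact hnot (Finset.mem_erase.2 ⟨hne i hi j, hm⟩)
      · exact fun k hk => hbi k (Finset.mem_erase.2 ⟨hne i hi k, hk⟩)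
      · exact fun k hk => hbj k (Finset.mem_erase.2 ⟨hne j hj k, hk⟩)
    · ext p
      by_cases hp : p = {2, 2 * n - 1} <;> simp [hp, hin]
  · rintro ⟨M', hM', rfl⟩
    have m1 : 1 ∈ insert 1 (insert (2 * n) (Finset.Icc 3 (2 * n - 2))) := by simp
    have m6 : 2 * n ∈ insert 1 (insert (2 * n) (Finset.Icc 3 (2 * n - 2))) := by simp
    have m3 : 3 ∈ insert 1 (insert (2 * n) (Finset.Icc 3 (2 * n - 2))) := by
      simp only [Finset.mem_insert, Finset.mem_Icc]
      omega
    have h1N : ({2 * n, 1} : Finset ℕ) ∉ M' := by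
      intro hN
      obtain ⟨r, hrS, hr3, hr⟩ := hM'.1.exists_partner m3
      simp only [Finset.mem_insert, Finset.mem_Icc] at hrS
      have hrN : r ≠ 2 * n := by
        rintro rfl
        rw [Finset.pair_comm] at hr
        exact absurd (hM'.1.partner_unique m6 hN hr) (by omega)
      exact hM'.not_both_prefer m3 m6 (by omega) hr hN hrN
        ((prefers_B h3).2 (by omega)) ((prefers_B h6).2 (by omega))
    -- The pair `{2, 2n}` does not block, since `2n` is not matched to `1`.
    have hN_pref : ¬ ∀ k, ({2 * n, k} : Finset ℕ) ∈ M' ∪ {({2, 2 * n - 1} : Finset ℕ)} →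
        k ≠ 2 * n → Prefers t (2 * n) 2 k := by
      intro hb
      obtain ⟨k, hkS, hkN, hk⟩ := hM'.1.exists_partner m6
      have := (prefers_B h6).1 (hb k (Finset.mem_union_left _ hk) hkN)
      simp only [Finset.mem_insert, Finset.mem_Icc] at hkS
      obtain rfl : k = 1 := by omega
      exact h1N hk
    -- The pair `{1, 2n-1}` does not block, since `1` is not matched to `2n`.
    have h1_pref : ¬ ∀ k, ({1, k} : Finset ℕ) ∈ M' ∪ {({2, 2 * n - 1} : Finset ℕ)} →
        k ≠ 1 → Prefers t 1 (2 * n - 1) k := by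
      intro hb
      obtain ⟨k, hkS, hkN, hk⟩ := hM'.1.exists_partner m1
      have := (prefers_A h1).1 (hb k (Finset.mem_union_left _ hk) hkN)
      simp only [Finset.mem_insert, Finset.mem_Icc] at hkS
      obtain rfl : k = 2 * n := by omega
      exact h1N (by rwa [Finset.pair_comm])
    have hpair : ({2, 2 * n - 1} : Finset ℕ) ∈ M' ∪ {({2, 2 * n - 1} : Finset ℕ)} := by simp
    have no2 : ∀ j ∈ Finset.Icc 1 (2 * n),
        ¬ IsBlocking t (M' ∪ {({2, 2 * n - 1} : Finset ℕ)}) 2 j := by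
      rintro j hj ⟨-, -, hb2, hbj⟩
      have := (prefers_B h2).1 (hb2 _ hpair (by omega))
      rw [Finset.mem_Icc] at hj
      obtain rfl : j = 2 * n := by omega
      exact hN_pref hbj
    have no5 : ∀ j ∈ Finset.Icc 1 (2 * n),
        ¬ IsBlocking t (M' ∪ {({2, 2 * n - 1} : Finset ℕ)}) (2 * n - 1) j := by
      rintro j hj ⟨-, -, hb5, hbj⟩
      have := (prefers_A h5).1 (hb5 2 (by simp [Finset.pair_comm]) (by omega))
      rw [Finset.mem_Icc] at hj
      obtain rfl : j = 1 := by omega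
      exact h1_pref hbj
    have symm : ∀ i j, IsBlocking t (M' ∪ {({2, 2 * n - 1} : Finset ℕ)}) i j →
        IsBlocking t (M' ∪ {({2, 2 * n - 1} : Finset ℕ)}) j i :=
      fun i j h => ⟨h.1.symm, by rw [Finset.pair_comm j i]; exact h.2.1, h.2.2.2, h.2.2.1⟩
    refine ⟨?_, fun i hi j hj hb => ?_⟩
    · rw [hIcc]
      exact hM'.1.insert_pair (by omega) h2S hNS
    · have hi2 : i ≠ 2 := by
        rintro rfl
        exact no2 j hj hb
      have hi5 : i ≠ 2 * n - 1 := by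
        rintro rfl
        exact no5 j hj hb
      have hj2 : j ≠ 2 := by
        rintro rfl
        exact no2 i hi (symm _ _ hb)
      have hj5 : j ≠ 2 * n - 1 := by
        rintro rfl
        exact no5 i hi (symm _ _ hb)
      rw [hIcc, Finset.mem_insert, Finset.mem_insert] at hi hj
      exact hM'.2 i (by tauto) j (by tauto) ⟨hb.1, fun h => hb.2.1 (Finset.mem_union_left _ h),
        fun k hk => hb.2.2.1 k (Finset.mem_union_left _ hk),
        fun k hk => hb.2.2.2 k (Finset.mem_union_left _ hk)⟩
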